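/- Fix an activation degree r ≥ 2 and an architecture d = (d_0, d_1, …, d_h) of positive integers with h ≥ 1. Suppose that for every i = 1, …, h−1 one has d_{h−i} ≥ min( d_h · r^{i·d_0}, C(r^{h−i} + d_0 − 1, r^{h−i}) ), where C(·,·) denotes the binomial coefficient. Then the functional variety V_{d,r} is filling: every real polynomial in the coefficients (i.e., every polynomial function on Sym_{r^{h−1}}(ℝ^{d_0})^{d_h}) that vanishes identically on the functional space F_{d,r} is the zero polynomial. -/

import Mathlib

/-- The polynomial network map: `net r d W h` is the tuple of `d h` homogeneous polynomials
in `d 0` variables computed by the network with architecture `(d 0, …, d h)`, activation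
`ρ_r` (coordinatewise `r`-th power), and weight matrices `W j ∈ ℝ^{d (j+1) × d j}`. -/
noncomputable def net (r : ℕ) (d : ℕ → ℕ)
    (W : ∀ j : ℕ, Matrix (Fin (d (j + 1))) (Fin (d j)) ℝ) :
    (h : ℕ) → Fin (d h) → MvPolynomial (Fin (d 0)) ℝ
  | 0 => fun i => MvPolynomial.X i
  | h + 1 => fun i => ∑ k : Fin (d h), MvPolynomial.C (W h i k) *
      net r d W h k ^ (if h = 0 then 1 else r)

/-- `VanishesToOrder e f a` says that all partial derivatives of `f` of order `< e` vanish
at `a`. -/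
def VanishesToOrder {σ : Type*} : ℕ → MvPolynomial σ ℝ → (σ → ℝ) → Prop
  | 0, _, _ => True
  | e + 1, f, a => MvPolynomial.eval a f = 0 ∧
      ∀ i, VanishesToOrder e (MvPolynomial.pderiv i f) a

theorem VanishesToOrder.smul {σ : Type*} (c : ℝ) {e : ℕ} {f : MvPolynomial σ ℝ} {a : σ → ℝ}
    (hf : VanishesToOrder e f a) : VanishesToOrder e (c • f) a := by
  induction e generalizing f with
  | zero => trivial
  | succ e ih =>
    refine ⟨by simp [hf.1], fun i => ?_⟩
    rw [Derivation.map_smul]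
    exact ih (hf.2 i)

/-- A univariate polynomial vanishing to order `e` at every point of `S` has degree at least
`#S * e` unless it is zero. -/
theorem Polynomial.eq_zero_of_iterate_derivative_eval_eq_zero (S : Finset ℝ) (e : ℕ)
    (p : Polynomial ℝ) (hdeg : p.natDegree < S.card * e)
    (hp : ∀ b ∈ S, ∀ m < e, (Polynomial.derivative^[m] p).eval b = 0) : p = 0 := by
  by_contra h0
  obtain _ | e := e
  · simp at hdeg
  have hmult : ∀ b ∈ S, e + 1 ≤ p.roots.count b := fun b hb => by
    rw [Polynomial.count_roots]
    exact Polynomial.lt_rootMultiplicity_of_isRoot_iterate_derivative h0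
      fun m hm => hp b hb m (Nat.lt_succ_of_le hm)
  have hle : S.card * (e + 1) ≤ p.natDegree := calc
    S.card * (e + 1) = ∑ _b ∈ S, (e + 1) := by simp
    _ ≤ ∑ b ∈ S, p.roots.count b := Finset.sum_le_sum hmult
    _ ≤ ∑ b ∈ S ∪ p.roots.toFinset, p.roots.count b :=
      Finset.sum_le_sum_of_subset Finset.subset_union_left
    _ = p.roots.card := Multiset.sum_count_eq_card fun a ha => by
      simp only [Finset.mem_union, Multiset.mem_toFinset]; exact Or.inr ha
    _ ≤ p.natDegree := p.card_roots'
  omega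

theorem MvPolynomial.finSuccEquiv_pderiv_zero {n : ℕ} (f : MvPolynomial (Fin (n + 1)) ℝ) :
    finSuccEquiv ℝ n (pderiv 0 f) = (finSuccEquiv ℝ n f).derivative := by
  ext t m
  rw [Polynomial.coeff_derivative, finSuccEquiv_coeff_coeff, coeff_pderiv]
  have h1 : Finsupp.cons t m + Finsupp.single 0 1 = Finsupp.cons (t + 1) m := by
    ext i; refine Fin.cases ?_ (fun j => ?_) i <;> simp
  have h2 : ((t : MvPolynomial (Fin n) ℝ) + 1) = C ((t : ℝ) + 1) := by simp
  rw [h1, h2, mul_comm _ (C _), coeff_C_mul, finSuccEquiv_coeff_coeff, Finsupp.cons_zero, mul_comm]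

theorem MvPolynomial.coeff_finSuccEquiv_pderiv_succ {n : ℕ} (f : MvPolynomial (Fin (n + 1)) ℝ)
    (i : Fin n) (t : ℕ) :
    (finSuccEquiv ℝ n (pderiv i.succ f)).coeff t = pderiv i ((finSuccEquiv ℝ n f).coeff t) := by
  ext m
  rw [finSuccEquiv_coeff_coeff, coeff_pderiv, coeff_pderiv, finSuccEquiv_coeff_coeff]
  have h1 : Finsupp.cons t m + Finsupp.single i.succ 1
      = Finsupp.cons t (m + Finsupp.single i 1) := by
    ext j
    refine Fin.cases ?_ (fun j => ?_) j
    · simp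
    · simp [Finsupp.single_apply]
  rw [h1, Finsupp.cons_succ]

/-- Vanishing to order `e` at `(b, a)` restricts to the line through `a` in direction `0`. -/
theorem VanishesToOrder.iterate_derivative_eval {n : ℕ} {e : ℕ}
    {f : MvPolynomial (Fin (n + 1)) ℝ} {a : Fin n → ℝ} {b : ℝ}
    (hf : VanishesToOrder e f (Fin.cons b a)) {m : ℕ} (hm : m < e) :
    (Polynomial.derivative^[m]
      ((MvPolynomial.finSuccEquiv ℝ n f).map (MvPolynomial.eval a))).eval b = 0 := by
  induction m generalizing e f with
  | zero =>
    obtain _ | e := e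
    · omega
    · rw [Function.iterate_zero, id, ← MvPolynomial.eval_eq_eval_mv_eval']
      exact hf.1
  | succ m ih =>
    obtain _ | e := e
    · omega
    · rw [Function.iterate_succ_apply, Polynomial.derivative_map,
        ← MvPolynomial.finSuccEquiv_pderiv_zero]
      exact ih (hf.2 0) (by omega)

/-- The top coefficient in the first variable inherits most of the vanishing order. -/
theorem VanishesToOrder.coeff_finSuccEquiv {n : ℕ} (S : Finset ℝ) (a : Fin n → ℝ) (t k e : ℕ)
    (f : MvPolynomial (Fin (n + 1)) ℝ) (hke : k ≤ e) (hte : t + S.card * k < S.card * (e + 1))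
    (hdeg : (MvPolynomial.finSuccEquiv ℝ n f).natDegree ≤ t)
    (hf : ∀ b ∈ S, VanishesToOrder e f (Fin.cons b a)) :
    VanishesToOrder k ((MvPolynomial.finSuccEquiv ℝ n f).coeff t) a := by
  induction k generalizing e f with
  | zero => trivial
  | succ k ih =>
    refine ⟨?_, fun i => ?_⟩
    · have hzero : (MvPolynomial.finSuccEquiv ℝ n f).map (MvPolynomial.eval a) = 0 := by
        refine Polynomial.eq_zero_of_iterate_derivative_eval_eq_zero S e _
          (lt_of_le_of_lt Polynomial.natDegree_map_le ?_)
          fun b hb m hm => (hf b hb).iterate_derivative_eval hm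
        nlinarith
      simpa using congrArg (Polynomial.coeff · t) hzero
    · obtain _ | e := e
      · omega
      rw [← MvPolynomial.coeff_finSuccEquiv_pderiv_succ]
      refine ih e _ (by omega) (by nlinarith) ?_ fun b hb => (hf b hb).2 i.succ
      refine Polynomial.natDegree_le_iff_coeff_eq_zero.2 fun N hN => ?_
      rw [MvPolynomial.coeff_finSuccEquiv_pderiv_succ,
        Polynomial.coeff_eq_zero_of_natDegree_lt (lt_of_le_of_lt hdeg hN), map_zero]

/-- Schwartz–Zippel with multiplicities: a polynomial of degree `< #S * e` vanishing to order `e`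
on the grid `S ^ n` is zero. -/
theorem MvPolynomial.eq_zero_of_vanishesToOrder_grid (S : Finset ℝ) {n : ℕ} (e : ℕ)
    (f : MvPolynomial (Fin n) ℝ) (hdeg : f.totalDegree < S.card * e)
    (hf : ∀ a : Fin n → ℝ, (∀ i, a i ∈ S) → VanishesToOrder e f a) : f = 0 := by
  induction n generalizing e with
  | zero =>
    obtain _ | e := e
    · simp at hdeg
    have h := (hf Fin.elim0 fun i => i.elim0).1
    rw [eq_C_of_isEmpty f] at h ⊢
    rw [eval_C] at h
    rw [h, map_zero]
  | succ n ih =>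
    by_contra h0
    have hF : finSuccEquiv ℝ n f ≠ 0 := by simpa using h0
    set t := (finSuccEquiv ℝ n f).natDegree with ht
    have hlead : (finSuccEquiv ℝ n f).coeff t ≠ 0 := by simpa [ht] using hF
    have hle := totalDegree_coeff_finSuccEquiv_add_le f t hlead
    have hS : 0 < S.card := Nat.pos_of_ne_zero fun h => by simp [h] at hdeg
    have hdiv := Nat.div_add_mod t S.card
    have hmod := Nat.mod_lt t hS
    obtain ⟨k, hk⟩ : ∃ k, e = t / S.card + k := by
      refine Nat.exists_eq_add_of_le (Nat.le_of_lt ?_)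
      rw [Nat.div_lt_iff_lt_mul hS, mul_comm]
      omega
    refine hlead (ih k _ ?_ fun a ha => ?_)
    · rw [hk, mul_add] at hdeg
      omega
    · refine VanishesToOrder.coeff_finSuccEquiv S a t k e f (hk ▸ Nat.le_add_left _ _) ?_ le_rfl
        fun b hb => hf _ fun i => ?_
      · rw [hk, mul_add, mul_add]
        omega
      · refine Fin.cases hb (fun j => ?_) i
        simpa using ha j

/-- Apply a linear functional to every coefficient of a polynomial with polynomial
coefficients. -/
noncomputable def mapCoeff {n : ℕ} (L : MvPolynomial (Fin n) ℝ →ₗ[ℝ] ℝ)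
    (P : MvPolynomial (Fin n) (MvPolynomial (Fin n) ℝ)) : MvPolynomial (Fin n) ℝ :=
  ∑ m ∈ P.support, MvPolynomial.monomial m (L (P.coeff m))

section MapCoeff

variable {n : ℕ} (L : MvPolynomial (Fin n) ℝ →ₗ[ℝ] ℝ)
  (P : MvPolynomial (Fin n) (MvPolynomial (Fin n) ℝ))

theorem coeff_mapCoeff (m : Fin n →₀ ℕ) : (mapCoeff L P).coeff m = L (P.coeff m) := by
  classical
  simp only [mapCoeff, MvPolynomial.coeff_sum, MvPolynomial.coeff_monomial]
  rw [Finset.sum_ite_eq']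
  split_ifs with h
  · rfl
  · rw [MvPolynomial.notMem_support_iff.1 h, map_zero]

theorem eval_mapCoeff (y : Fin n → ℝ) :
    MvPolynomial.eval y (mapCoeff L P) =
      L (MvPolynomial.eval (fun i => MvPolynomial.C (y i)) P) := by
  rw [mapCoeff, map_sum, MvPolynomial.eval_eq', map_sum]
  refine Finset.sum_congr rfl fun m _ => ?_
  have : P.coeff m * ∏ i, (MvPolynomial.C (y i) : MvPolynomial (Fin n) ℝ) ^ m i =
      (∏ i, y i ^ m i) • P.coeff m := by
    rw [MvPolynomial.smul_eq_C_mul, mul_comm]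
    simp
  rw [this, map_smul, MvPolynomial.eval_monomial, smul_eq_mul, mul_comm,
    Finsupp.prod_fintype _ _ fun i => pow_zero _]

theorem pderiv_mapCoeff (i : Fin n) :
    MvPolynomial.pderiv i (mapCoeff L P) = mapCoeff L (MvPolynomial.pderiv i P) := by
  ext m
  rw [MvPolynomial.coeff_pderiv, coeff_mapCoeff, coeff_mapCoeff, MvPolynomial.coeff_pderiv]
  have h : P.coeff (m + Finsupp.single i 1) * ((m i : MvPolynomial (Fin n) ℝ) + 1) =
      ((m i : ℝ) + 1) • P.coeff (m + Finsupp.single i 1) := by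
    rw [MvPolynomial.smul_eq_C_mul, mul_comm]
    simp
  rw [h, map_smul, smul_eq_mul, mul_comm]

theorem mapCoeff_natCast_mul (k : ℕ) :
    mapCoeff L ((k : MvPolynomial (Fin n) (MvPolynomial (Fin n) ℝ)) * P) =
      (k : ℝ) • mapCoeff L P := by
  ext m
  rw [coeff_mapCoeff, MvPolynomial.coeff_smul, coeff_mapCoeff, ← nsmul_eq_mul,
    MvPolynomial.coeff_smul, map_nsmul, nsmul_eq_mul, smul_eq_mul]

theorem totalDegree_mapCoeff_le : (mapCoeff L P).totalDegree ≤ P.totalDegree := by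
  refine Finset.sup_mono fun m hm => ?_
  rw [MvPolynomial.mem_support_iff, coeff_mapCoeff] at hm
  rw [MvPolynomial.mem_support_iff]
  exact fun h => hm (by rw [h, map_zero])

end MapCoeff

/-- The linear form with coefficient vector `y`. -/
noncomputable def linearForm {n : ℕ} (y : Fin n → ℝ) : MvPolynomial (Fin n) ℝ :=
  ∑ i, MvPolynomial.C (y i) * MvPolynomial.X i

theorem linearForm_isHomogeneous {n : ℕ} (y : Fin n → ℝ) : (linearForm y).IsHomogeneous 1 :=
  MvPolynomial.IsHomogeneous.sum _ _ _ fun i _ => by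
    simpa using (MvPolynomial.isHomogeneous_C (Fin n) (y i)).mul
      (MvPolynomial.isHomogeneous_X ℝ i)

theorem linearForm_pow_isHomogeneous {n : ℕ} (y : Fin n → ℝ) (N : ℕ) :
    (linearForm y ^ N).IsHomogeneous N := by
  simpa using (linearForm_isHomogeneous y).pow N

/-- The linear form whose coefficients are independent variables. -/
noncomputable def genericLinearForm (n : ℕ) :
    MvPolynomial (Fin n) (MvPolynomial (Fin n) ℝ) :=
  ∑ i, MvPolynomial.C (MvPolynomial.X i) * MvPolynomial.X i

theorem eval_genericLinearForm {n : ℕ} (y : Fin n → ℝ) :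
    MvPolynomial.eval (fun i => MvPolynomial.C (y i)) (genericLinearForm n) = linearForm y := by
  simp [genericLinearForm, linearForm, mul_comm]

theorem pderiv_genericLinearForm {n : ℕ} (i : Fin n) :
    MvPolynomial.pderiv i (genericLinearForm n) = MvPolynomial.C (MvPolynomial.X i) := by
  classical
  simp [genericLinearForm, MvPolynomial.pderiv_X, Pi.single_apply]

theorem totalDegree_genericLinearForm_pow_le (n N : ℕ) :
    (genericLinearForm n ^ N).totalDegree ≤ N := by
  have h : (genericLinearForm n).IsHomogeneous 1 :=
    MvPolynomial.IsHomogeneous.sum _ _ _ fun i _ => by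
      simpa using (MvPolynomial.isHomogeneous_C (Fin n) (MvPolynomial.X i)).mul
        (MvPolynomial.isHomogeneous_X (MvPolynomial (Fin n) ℝ) i)
  simpa using (h.pow N).totalDegree_le

theorem coeff_genericLinearForm_pow {n : ℕ} (m : Fin n →₀ ℕ) :
    (genericLinearForm n ^ m.degree).coeff m =
      MvPolynomial.C (m.multinomial : ℝ) * MvPolynomial.monomial m 1 := by
  have h : genericLinearForm n =
      ∑ i, (MvPolynomial.X i : MvPolynomial (Fin n) ℝ) • MvPolynomial.X i := by
    simp [genericLinearForm, MvPolynomial.smul_eq_C_mul]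
  rw [h, MvPolynomial.coeff_linearCombination_X_pow_of_fintype,
      if_pos (by simp [Finsupp.sum, Finsupp.degree_apply]),
    MvPolynomial.monomial_eq]
  simp

/-- A functional on forms of degree `N` is determined by its values on `N`-th powers of
linear forms, encoded as a polynomial. -/
theorem eq_zero_of_mapCoeff_genericLinearForm_pow {n N : ℕ}
    {L : MvPolynomial (Fin n) ℝ →ₗ[ℝ] ℝ} (hL : mapCoeff L (genericLinearForm n ^ N) = 0)
    {p : MvPolynomial (Fin n) ℝ} (hp : p.IsHomogeneous N) : L p = 0 := by
  rw [p.as_sum, map_sum]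
  refine Finset.sum_eq_zero fun m hm => ?_
  have hdeg : m.degree = N := by
    by_contra hne
    exact MvPolynomial.mem_support_iff.1 hm (hp.coeff_eq_zero hne)
  have h := congrArg (MvPolynomial.coeff m) hL
  rw [coeff_mapCoeff, ← hdeg, coeff_genericLinearForm_pow, ← MvPolynomial.smul_eq_C_mul, map_smul,
    smul_eq_mul, MvPolynomial.coeff_zero, mul_eq_zero, Nat.cast_eq_zero] at h
  have h1 := h.resolve_left (Nat.multinomial_pos m.support m).ne'
  rw [← mul_one (p.coeff m), ← smul_eq_mul, ← MvPolynomial.smul_monomial, map_smul, h1, smul_zero]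

/-- Powers of linear forms span the forms of degree `N`. -/
theorem mem_span_linearForm_pow {n N : ℕ} {p : MvPolynomial (Fin n) ℝ}
    (hp : p.IsHomogeneous N) :
    p ∈ Submodule.span ℝ (Set.range fun y : Fin n → ℝ => linearForm y ^ N) := by
  by_contra hmem
  obtain ⟨L, hLp, hker⟩ := Submodule.exists_le_ker_of_notMem hmem
  refine hLp (eq_zero_of_mapCoeff_genericLinearForm_pow (N := N)
      (MvPolynomial.funext fun y => ?_) hp)
  rw [eval_mapCoeff, map_pow, eval_genericLinearForm, map_zero]
  exact hker (Submodule.subset_span ⟨y, rfl⟩)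

theorem vanishesToOrder_mapCoeff {n N D : ℕ} {L : MvPolynomial (Fin n) ℝ →ₗ[ℝ] ℝ}
    {s : Fin n → ℝ} (hDN : D ≤ N)
    (hL : ∀ v : MvPolynomial (Fin n) ℝ, v.IsHomogeneous D → L (linearForm s ^ (N - D) * v) = 0)
    (e j : ℕ) (hje : j + e ≤ D + 1) (u : MvPolynomial (Fin n) ℝ) (hu : u.IsHomogeneous j) :
    VanishesToOrder e (mapCoeff L (MvPolynomial.C u * genericLinearForm n ^ (N - j))) s := by
  induction e generalizing j u with
  | zero => trivial
  | succ e ih =>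
    refine ⟨?_, fun i => ?_⟩
    · rw [eval_mapCoeff, map_mul, map_pow, eval_genericLinearForm, MvPolynomial.eval_C,
        show N - j = (N - D) + (D - j) by omega, pow_add, mul_left_comm]
      refine hL _ ?_
      have := hu.mul (linearForm_pow_isHomogeneous s (D - j))
      rwa [show j + (D - j) = D by omega] at this
    · rw [pderiv_mapCoeff, MvPolynomial.pderiv_C_mul, MvPolynomial.pderiv_pow,
        pderiv_genericLinearForm]
      have h : (MvPolynomial.C u * (((N - j : ℕ) : MvPolynomial (Fin n) (MvPolynomial (Fin n) ℝ)) *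
          genericLinearForm n ^ (N - j - 1) * MvPolynomial.C (MvPolynomial.X i))) =
          ((N - j : ℕ) : MvPolynomial (Fin n) (MvPolynomial (Fin n) ℝ)) *
            (MvPolynomial.C (u * MvPolynomial.X i) * genericLinearForm n ^ (N - (j + 1))) := by
        rw [MvPolynomial.C_mul, Nat.sub_sub]
        ring
      rw [h, mapCoeff_natCast_mul]
      exact (ih (j + 1) (by omega) _ (hu.mul (MvPolynomial.isHomogeneous_X ℝ i))).smul _

/-- Every form of degree `r * D` is a combination, with coefficients of degree `D`, of the powers
`ℓ ^ ((r - 1) * D)` where `ℓ` ranges over the linear forms indexed by a grid of side `r`. -/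
theorem exists_sum_linearForm_pow_mul {n r D : ℕ} (hr : 1 ≤ r) {p : MvPolynomial (Fin n) ℝ}
    (hp : p.IsHomogeneous (r * D)) :
    ∃ v : (Fin n → Fin r) → MvPolynomial (Fin n) ℝ, (∀ g, (v g).IsHomogeneous D) ∧
      p = ∑ g, linearForm (fun i => ((g i : ℕ) : ℝ)) ^ (r * D - D) * v g := by
  classical
  let T : ((Fin n → Fin r) → MvPolynomial.homogeneousSubmodule (Fin n) ℝ D) →ₗ[ℝ]
      MvPolynomial (Fin n) ℝ :=
    ∑ g, (LinearMap.mulLeft ℝ (linearForm (fun i => ((g i : ℕ) : ℝ)) ^ (r * D - D))) ∘ₗ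
      (Submodule.subtype _) ∘ₗ LinearMap.proj g
  have hT : ∀ v, T v = ∑ g, linearForm (fun i => ((g i : ℕ) : ℝ)) ^ (r * D - D) *
      (v g : MvPolynomial (Fin n) ℝ) := fun v => by
    simp [T, LinearMap.sum_apply]
  suffices hmem : p ∈ LinearMap.range T by
    obtain ⟨v, rfl⟩ := hmem
    exact ⟨fun g => v g, fun g => (v g).2, hT v⟩
  by_contra hmem
  obtain ⟨L, hLp, hker⟩ := Submodule.exists_le_ker_of_notMem hmem
  refine hLp (eq_zero_of_mapCoeff_genericLinearForm_pow (N := r * D) ?_ hp)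
  refine MvPolynomial.eq_zero_of_vanishesToOrder_grid
    (Finset.univ.image fun k : Fin r => ((k : ℕ) : ℝ)) (D + 1) _ ?_ fun a ha => ?_
  · rw [Finset.card_image_of_injective _ fun a b h => Fin.ext (Nat.cast_injective h),
      Finset.card_univ, Fintype.card_fin]
    have := (totalDegree_mapCoeff_le L _).trans (totalDegree_genericLinearForm_pow_le n (r * D))
    rw [mul_add]
    omega
  · choose g hg using fun i => Finset.mem_image.1 (ha i)
    obtain rfl : (fun i => ((g i : ℕ) : ℝ)) = a := funext fun i => (hg i).2
    have := vanishesToOrder_mapCoeff (n := n) (N := r * D) (D := D) (L := L)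
      (s := fun i => ((g i : ℕ) : ℝ)) (by nlinarith) (fun v hv => ?_) (D + 1) 0 (by omega) 1
      (MvPolynomial.isHomogeneous_one _ _)
    · simpa using this
    · have h := hker ⟨Pi.single g ⟨v, hv⟩, rfl⟩
      rw [LinearMap.mem_ker, hT, Finset.sum_eq_single g (fun b _ hb => by simp [hb]) (by simp)] at h
      simpa using h

/-- Exponents of the monomials of degree `N` in `n` variables. -/
abbrev FormIndex (n N : ℕ) : Type :=
  {m : Fin n →₀ ℕ // m ∈ (Finset.univ : Finset (Fin n)).finsuppAntidiag N}

theorem mem_finsuppAntidiag_univ_iff {n N : ℕ} {m : Fin n →₀ ℕ} :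
    m ∈ (Finset.univ : Finset (Fin n)).finsuppAntidiag N ↔ m.degree = N := by
  simp [Finsupp.degree_eq_sum]

/-- The form of degree `N` with prescribed coefficients. -/
noncomputable def ofCoeffs {n N : ℕ} (c : FormIndex n N → ℝ) : MvPolynomial (Fin n) ℝ :=
  ∑ m, MvPolynomial.monomial m.1 (c m)

theorem coeff_ofCoeffs {n N : ℕ} (c : FormIndex n N → ℝ) (m : Fin n →₀ ℕ) :
    (ofCoeffs c).coeff m =
      if h : m ∈ (Finset.univ : Finset (Fin n)).finsuppAntidiag N then c ⟨m, h⟩ else 0 := by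
  classical
  simp only [ofCoeffs, MvPolynomial.coeff_sum, MvPolynomial.coeff_monomial]
  split_ifs with h
  · rw [Finset.sum_eq_single ⟨m, h⟩ (fun b _ hb => if_neg fun h' => hb (Subtype.ext h'))
      (by simp), if_pos rfl]
  · exact Finset.sum_eq_zero fun b _ => if_neg fun h' : b.1 = m => h (h' ▸ b.2)

theorem ofCoeffs_isHomogeneous {n N : ℕ} (c : FormIndex n N → ℝ) :
    (ofCoeffs c).IsHomogeneous N :=
  MvPolynomial.IsHomogeneous.sum _ _ _ fun m _ =>
    MvPolynomial.isHomogeneous_monomial _ (mem_finsuppAntidiag_univ_iff.1 m.2)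

theorem ofCoeffs_coeff {n N : ℕ} {p : MvPolynomial (Fin n) ℝ} (hp : p.IsHomogeneous N) :
    ofCoeffs (fun m : FormIndex n N => p.coeff m.1) = p := by
  ext m
  rw [coeff_ofCoeffs]
  split_ifs with h
  · rfl
  · exact (hp.coeff_eq_zero fun h' => h (mem_finsuppAntidiag_univ_iff.2 h')).symm

theorem ofCoeffs_add_smul {n N : ℕ} (c c' : FormIndex n N → ℝ) (t : ℝ) :
    ofCoeffs (c + t • c') = ofCoeffs c + t • ofCoeffs c' := by
  simp [ofCoeffs, Finset.sum_add_distrib, Finset.smul_sum, MvPolynomial.smul_monomial]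

theorem analyticAt_coeff_ofCoeffs {n D : ℕ} {κ : Type} [Fintype κ]
    (x : κ → FormIndex n D → ℝ) (k : κ) (m : Fin n →₀ ℕ) :
    AnalyticAt ℝ (fun y : κ → FormIndex n D → ℝ => (ofCoeffs (y k)).coeff m) x := by
  simp only [coeff_ofCoeffs]
  split_ifs with h
  · exact (((ContinuousLinearMap.proj ⟨m, h⟩ : (FormIndex n D → ℝ) →L[ℝ] ℝ)).comp
      (ContinuousLinearMap.proj (R := ℝ) (φ := fun _ : κ => FormIndex n D → ℝ) k)).analyticAt x
  · exact analyticAt_const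

theorem analyticAt_coeff_pow {n : ℕ} {E : Type*} [NormedAddCommGroup E] [NormedSpace ℝ E]
    {a : E → MvPolynomial (Fin n) ℝ} {x : E}
    (ha : ∀ m, AnalyticAt ℝ (fun y => (a y).coeff m) x) (r : ℕ) (m : Fin n →₀ ℕ) :
    AnalyticAt ℝ (fun y => (a y ^ r).coeff m) x := by
  classical
  induction r generalizing m with
  | zero => simpa using analyticAt_const
  | succ r ih =>
    simp only [pow_succ, MvPolynomial.coeff_mul]
    exact Finset.analyticAt_fun_sum _ fun i _ => (ih _).mul (ha _)

theorem hasDerivAt_coeff_pow {n : ℕ} (p v : MvPolynomial (Fin n) ℝ) (r : ℕ) (m : Fin n →₀ ℕ) :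
    HasDerivAt (fun t : ℝ => ((p + t • v) ^ r).coeff m)
      (((r : MvPolynomial (Fin n) ℝ) * p ^ (r - 1) * v).coeff m) 0 := by
  classical
  induction r generalizing m with
  | zero => simpa using hasDerivAt_const _ _
  | succ r ih =>
    have hlin : ∀ m, HasDerivAt (fun t : ℝ => (p + t • v).coeff m) (v.coeff m) 0 := fun m => by
      simpa using ((hasDerivAt_id (0 : ℝ)).mul_const (v.coeff m)).const_add (p.coeff m)
    have hsum := HasDerivAt.fun_sum (u := Finset.HasAntidiagonal.antidiagonal m)
      fun i _ => (ih i.1).mul (hlin i.2)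
    have hfun : (fun t : ℝ => ((p + t • v) ^ (r + 1)).coeff m) = fun t : ℝ =>
        ∑ i ∈ Finset.HasAntidiagonal.antidiagonal m,
          ((p + t • v) ^ r).coeff i.1 * (p + t • v).coeff i.2 :=
      funext fun t => by rw [pow_succ, MvPolynomial.coeff_mul]
    rw [hfun]
    refine hsum.congr_deriv ?_
    simp only [zero_smul, add_zero, Finset.sum_add_distrib, ← MvPolynomial.coeff_mul,
      ← MvPolynomial.coeff_add]
    congr 1
    obtain _ | r := r
    · simp
    · simp only [Nat.add_sub_cancel]
      push_cast
      ring

/-- Coefficients of the sums of `r`-th powers of blocks of forms, one block for each `k : κ`. -/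
noncomputable def powerSumCoeffs {n : ℕ} (r D : ℕ) {κ G : Type} [Fintype G]
    (c : κ × G → FormIndex n D → ℝ) (k : κ) (m : FormIndex n (r * D)) : ℝ :=
  (∑ g, ofCoeffs (c (k, g)) ^ r).coeff m.1

theorem analyticOnNhd_powerSumCoeffs {n : ℕ} (r D : ℕ) {κ G : Type} [Fintype κ] [Fintype G] :
    AnalyticOnNhd ℝ (powerSumCoeffs (n := n) r D (κ := κ) (G := G)) Set.univ := by
  intro x _
  refine AnalyticAt.pi fun k => AnalyticAt.pi fun m => ?_
  simp only [powerSumCoeffs, MvPolynomial.coeff_sum]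
  refine Finset.analyticAt_fun_sum _ fun g _ => analyticAt_coeff_pow
    (fun m' => analyticAt_coeff_ofCoeffs _ _ _) r m.1

theorem hasDerivAt_powerSumCoeffs {n : ℕ} (r D : ℕ) {κ G : Type} [Fintype κ] [Fintype G]
    (c v : κ × G → FormIndex n D → ℝ) (k : κ) (m : FormIndex n (r * D)) :
    HasDerivAt (fun t : ℝ => powerSumCoeffs r D (c + t • v) k m)
      ((∑ g, (r : MvPolynomial (Fin n) ℝ) * ofCoeffs (c (k, g)) ^ (r - 1) *
        ofCoeffs (v (k, g))).coeff m.1) 0 := by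
  simp only [powerSumCoeffs, MvPolynomial.coeff_sum, Pi.add_apply, Pi.smul_apply,
    ofCoeffs_add_smul]
  exact HasDerivAt.fun_sum fun g _ => hasDerivAt_coeff_pow _ _ _ _

/-- Sums of `r ^ n` many `r`-th powers of forms of degree `D` fill a neighbourhood of some tuple
of forms of degree `r * D`. -/
theorem exists_range_powerSumCoeffs_mem_nhds (n : ℕ) {r : ℕ} (D : ℕ) (hr : 1 ≤ r) (κ : Type)
    [Fintype κ] :
    ∃ w, Set.range (powerSumCoeffs (n := n) r D (κ := κ) (G := Fin n → Fin r)) ∈ nhds w := by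
  let c : κ × (Fin n → Fin r) → FormIndex n D → ℝ := fun kg m =>
    (linearForm (fun i => ((kg.2 i : ℕ) : ℝ)) ^ D).coeff m.1
  have hstrict := (analyticOnNhd_powerSumCoeffs (n := n) r D (κ := κ) (G := Fin n → Fin r) c
    (Set.mem_univ c)).hasStrictFDerivAt
  refine ⟨powerSumCoeffs r D c, ?_⟩
  rw [← hstrict.map_nhds_eq_of_surj]
  · exact Filter.mem_map.2 (Filter.univ_mem' fun x => Set.mem_range_self x)
  rw [LinearMap.range_eq_top]
  intro w
  choose v hv hw using fun k : κ =>
    exists_sum_linearForm_pow_mul (n := n) (r := r) (D := D) hr (ofCoeffs_isHomogeneous (w k))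
  let u : κ × (Fin n → Fin r) → FormIndex n D → ℝ := fun kg m =>
    ((r : ℝ)⁻¹ • v kg.1 kg.2).coeff m.1
  refine ⟨u, ?_⟩
  have hline : HasDerivAt (fun t : ℝ => c + t • u) u 0 := by
    simpa using ((hasDerivAt_id (0 : ℝ)).smul_const u).const_add c
  have hcomp := HasFDerivAt.comp_hasDerivAt (x := (0 : ℝ)) (f := fun t : ℝ => c + t • u)
    (l := powerSumCoeffs r D) (by simpa using hstrict.hasFDerivAt) hline
  funext k m
  have h1 := hasDerivAt_pi.1 (hasDerivAt_pi.1 hcomp k) m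
  refine (h1.unique (hasDerivAt_powerSumCoeffs r D c u k m)).trans ?_
  have h2 : ∀ g, (r : MvPolynomial (Fin n) ℝ) * ofCoeffs (c (k, g)) ^ (r - 1) *
      ofCoeffs (u (k, g)) =
      linearForm (fun i => ((g i : ℕ) : ℝ)) ^ (r * D - D) * v k g := fun g => by
    have hr0 : (r : ℝ) ≠ 0 := by positivity
    rw [ofCoeffs_coeff (linearForm_pow_isHomogeneous _ D),
      ofCoeffs_coeff ((MvPolynomial.homogeneousSubmodule (Fin n) ℝ D).smul_mem _ (hv k g)),
      ← pow_mul, mul_smul_comm, mul_assoc, ← nsmul_eq_mul, ← Nat.cast_smul_eq_nsmul ℝ,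
      inv_smul_smul₀ hr0, Nat.mul_sub, mul_one, mul_comm D r]
  rw [Finset.sum_congr rfl fun g _ => h2 g, ← hw k, coeff_ofCoeffs, dif_pos m.2]

/-- If `M` is at least the dimension of the space of forms of degree `N`, then `M` suitable powers
of linear forms span this space. -/
theorem exists_linearForm_pow_spanning {n N M : ℕ} (hM : (N + n - 1).choose N ≤ M) :
    ∃ y : Fin M → Fin n → ℝ, ∀ p : MvPolynomial (Fin n) ℝ, p.IsHomogeneous N →
      ∃ c : Fin M → ℝ, ∑ k, c k • linearForm (y k) ^ N = p := by
  set s := Set.range fun y : Fin n → ℝ => linearForm y ^ N with hs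
  set b : FormIndex n N → MvPolynomial (Fin n) ℝ := fun m => MvPolynomial.monomial m.1 1
  have hle : Submodule.span ℝ s ≤ Submodule.span ℝ (Set.range b) := by
    rw [Submodule.span_le]
    rintro _ ⟨y, rfl⟩
    simp only [SetLike.mem_coe]
    rw [← ofCoeffs_coeff (linearForm_pow_isHomogeneous y N), ofCoeffs]
    refine Submodule.sum_mem _ fun m _ => ?_
    rw [← mul_one (MvPolynomial.coeff _ _), ← smul_eq_mul, ← MvPolynomial.smul_monomial]
    exact Submodule.smul_mem _ _ (Submodule.subset_span ⟨m, rfl⟩)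
  have : FiniteDimensional ℝ (Submodule.span ℝ (Set.range b)) :=
    FiniteDimensional.span_of_finite ℝ (Set.finite_range b)
  have : FiniteDimensional ℝ (Submodule.span ℝ s) := Submodule.finiteDimensional_of_le hle
  have hrank : Module.finrank ℝ (Submodule.span ℝ s) ≤ M := by
    refine (Submodule.finrank_mono hle).trans ((finrank_range_le_card b).trans ?_)
    rw [Fintype.card_coe, Finset.card_finsuppAntidiag_nat_eq_choose, Finset.card_univ,
      Fintype.card_fin, add_comm n]
    exact hM
  obtain ⟨g, hgs, hspan, -⟩ := Submodule.exists_fun_fin_finrank_span_eq ℝ s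
  choose y hy using hgs
  refine ⟨fun k => if h : k.1 < Module.finrank ℝ (Submodule.span ℝ s) then y ⟨k.1, h⟩ else 0,
    fun p hp => ?_⟩
  rw [← Submodule.mem_span_range_iff_exists_fun]
  have hmem := mem_span_linearForm_pow hp
  rw [← hs, ← hspan] at hmem
  refine Submodule.span_mono ?_ hmem
  rintro _ ⟨i, rfl⟩
  exact ⟨Fin.castLE hrank i, by simpa using hy i⟩

section Network

variable (r : ℕ) (d : ℕ → ℕ)

theorem net_congr {W W' : ∀ j : ℕ, Matrix (Fin (d (j + 1))) (Fin (d j)) ℝ} {j : ℕ}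
    (h : ∀ l < j, W l = W' l) : net r d W j = net r d W' j := by
  induction j with
  | zero => rfl
  | succ j ih =>
    funext i
    simp only [net]
    rw [ih fun l hl => h l (Nat.lt_succ_of_lt hl), h j (Nat.lt_succ_self j)]

/-- The last weight matrix can be chosen freely. -/
theorem exists_net_succ (W : ∀ j : ℕ, Matrix (Fin (d (j + 1))) (Fin (d j)) ℝ) (j : ℕ)
    (A : Matrix (Fin (d (j + 1))) (Fin (d j)) ℝ) :
    ∃ W', ∀ i, net r d W' (j + 1) i =
      ∑ k, MvPolynomial.C (A i k) * net r d W j k ^ (if j = 0 then 1 else r) := by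
  refine ⟨Function.update W j A, fun i => ?_⟩
  have h : net r d (Function.update W j A) j = net r d W j :=
    net_congr r d fun l hl => Function.update_of_ne hl.ne A W
  simp only [net]
  rw [h, Function.update_self]

theorem net_succ_isHomogeneous (W : ∀ j : ℕ, Matrix (Fin (d (j + 1))) (Fin (d j)) ℝ) (j : ℕ)
    (i : Fin (d (j + 1))) : (net r d W (j + 1) i).IsHomogeneous (r ^ j) := by
  induction j with
  | zero => simpa [net, linearForm] using linearForm_isHomogeneous (W 0 i)
  | succ j ih =>
    rw [net]
    refine MvPolynomial.IsHomogeneous.sum _ _ _ fun k _ => ?_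
    rw [if_neg (Nat.succ_ne_zero j), pow_succ]
    simpa using (MvPolynomial.isHomogeneous_C _ (W (j + 1) i k)).mul ((ih k).pow r)

/-- If every layer is at least as wide as the dimension of the space of forms produced by its
activations, then the network computes every tuple of forms. -/
theorem exists_net_eq (j : ℕ)
    (hB : ∀ l, 1 ≤ l → l ≤ j → (r ^ l + d 0 - 1).choose (r ^ l) ≤ d l)
    (p : Fin (d (j + 1)) → MvPolynomial (Fin (d 0)) ℝ) (hp : ∀ i, (p i).IsHomogeneous (r ^ j)) :
    ∃ W, net r d W (j + 1) = p := by
  induction j with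
  | zero =>
    have hlin : ∀ i, ∃ c : Fin (d 0) → ℝ, ∑ k, c k • MvPolynomial.X k = p i := fun i => by
      rw [← Submodule.mem_span_range_iff_exists_fun,
        ← MvPolynomial.homogeneousSubmodule_one_eq_span_X]
      simpa using hp i
    choose c hc using hlin
    obtain ⟨W, hW⟩ := exists_net_succ r d (fun _ => 0) 0 c
    refine ⟨W, funext fun i => ?_⟩
    rw [hW, ← hc]
    simp [net, MvPolynomial.smul_eq_C_mul]
  | succ j ih =>
    obtain ⟨y, hy⟩ := exists_linearForm_pow_spanning (hB (j + 1) (by omega) le_rfl)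
    obtain ⟨W₀, hW₀⟩ := ih (fun l h1 h2 => hB l h1 (by omega))
      (fun k => linearForm (y k) ^ r ^ j) fun k => linearForm_pow_isHomogeneous _ _
    choose c hc using fun i => hy (p i) (hp i)
    obtain ⟨W, hW⟩ := exists_net_succ r d W₀ (j + 1) c
    refine ⟨W, funext fun i => ?_⟩
    rw [hW, ← hc, hW₀]
    simp [MvPolynomial.smul_eq_C_mul, ← pow_mul, pow_succ]

theorem choose_pow_mono {r n l j : ℕ} (hr : 1 ≤ r) (hn : 0 < n) (hlj : l ≤ j) :
    (r ^ l + n - 1).choose (r ^ l) ≤ (r ^ j + n - 1).choose (r ^ j) := by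
  obtain ⟨n, rfl⟩ : ∃ k, n = k + 1 := ⟨n - 1, by omega⟩
  simp only [Nat.add_succ_sub_one, Nat.choose_symm_add]
  exact Nat.choose_le_choose n (Nat.add_le_add_right (Nat.pow_le_pow_right hr hlj) n)

/-- An analytic function of the coefficients of the selected outputs that vanishes on all networks
is zero, provided that the network computes every tuple of forms. -/
theorem eq_zero_of_vanishes_on_net_of_choose_le (j : ℕ) {κ : Type} (e : κ ↪ Fin (d (j + 1)))
    (hB : ∀ l, 1 ≤ l → l ≤ j → (r ^ l + d 0 - 1).choose (r ^ l) ≤ d l)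
    (f : (κ → FormIndex (d 0) (r ^ j) → ℝ) → ℝ)
    (hvan : ∀ W, f (fun k m => (net r d W (j + 1) (e k)).coeff m.1) = 0) : f = 0 := by
  funext c
  obtain ⟨W, hW⟩ := exists_net_eq r d j hB (Function.extend e (fun k => ofCoeffs (c k)) 0)
    fun i => by
      by_cases hi : ∃ k, e k = i
      · obtain ⟨k, rfl⟩ := hi
        rw [e.injective.extend_apply]
        exact ofCoeffs_isHomogeneous _
      · rw [Function.extend_apply' _ _ _ hi]
        exact MvPolynomial.isHomogeneous_zero _ _ _
  have hc : (fun k (m : FormIndex (d 0) (r ^ j)) =>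
      (net r d W (j + 1) (e k)).coeff m.1) = c := by
    funext k m
    rw [hW, e.injective.extend_apply, coeff_ofCoeffs, dif_pos m.2]
  simpa [hc] using hvan W

/-- Blocks of outputs of one layer can be turned into sums of `r`-th powers in the next. -/
theorem exists_net_succ_eq_sum_pow (W : ∀ j : ℕ, Matrix (Fin (d (j + 1))) (Fin (d j)) ℝ) (j : ℕ)
    {κ G : Type} [Fintype κ] [Fintype G] (e : κ ↪ Fin (d (j + 2)))
    (e' : κ × G ↪ Fin (d (j + 1))) :
    ∃ W', ∀ k, net r d W' (j + 2) (e k) = ∑ g, net r d W (j + 1) (e' (k, g)) ^ r := by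
  classical
  obtain ⟨W', hW'⟩ := exists_net_succ r d W (j + 1) fun i =>
    Function.extend e' (fun kg => if e kg.1 = i then 1 else 0) 0
  refine ⟨W', fun k => ?_⟩
  rw [hW', if_neg (Nat.succ_ne_zero j), ← Fintype.sum_of_injective e' e'.injective
    (fun kg => if kg.1 = k then net r d W (j + 1) (e' kg) ^ r else 0) _ ?_ ?_,
    Fintype.sum_prod_type, Finset.sum_eq_single k]
  · simp
  · intro b _ hb
    simp [hb]
  · simp
  · intro i hi
    rw [Function.extend_apply' _ _ _ hi]
    simp
  · intro kg
    rw [e'.injective.extend_apply]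
    by_cases h : kg.1 = k <;> simp [h]

/-- An analytic function of the coefficients of the outputs selected by `e` that vanishes on all
networks is zero. -/
theorem eq_zero_of_vanishes_on_net (hr : 1 ≤ r) (hd : 0 < d 0) (j : ℕ) (κ : Type) [Fintype κ]
    (e : κ ↪ Fin (d (j + 1)))
    (hwide : ∀ l, 1 ≤ l → l ≤ j → min (Fintype.card κ * r ^ ((j + 1 - l) * d 0))
      ((r ^ l + d 0 - 1).choose (r ^ l)) ≤ d l)
    (N : ℕ) (hN : N = r ^ j) (f : (κ → FormIndex (d 0) N → ℝ) → ℝ)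
    (hf : AnalyticOnNhd ℝ f Set.univ)
    (hvan : ∀ W, f (fun k m => (net r d W (j + 1) (e k)).coeff m.1) = 0) : f = 0 := by
  induction j generalizing κ N with
  | zero =>
    subst hN
    exact eq_zero_of_vanishes_on_net_of_choose_le r d 0 e (fun l h1 h2 => by omega) f hvan
  | succ j ih =>
    obtain hB | hB := le_or_gt ((r ^ (j + 1) + d 0 - 1).choose (r ^ (j + 1)))
      (Fintype.card κ * r ^ d 0)
    · subst hN
      refine eq_zero_of_vanishes_on_net_of_choose_le r d (j + 1) e (fun l h1 h2 => ?_) f hvan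
      have hpow : r ^ d 0 ≤ r ^ ((j + 1 + 1 - l) * d 0) :=
        Nat.pow_le_pow_right hr (Nat.le_mul_of_pos_left _ (by omega))
      have hle := ((choose_pow_mono hr hd h2).trans hB).trans (Nat.mul_le_mul_left _ hpow)
      exact (min_eq_right hle).symm.le.trans (hwide l h1 h2)
    rw [pow_succ'] at hN
    subst hN
    have hcard : Fintype.card (κ × (Fin (d 0) → Fin r)) ≤ Fintype.card (Fin (d (j + 1))) := by
      simp only [Fintype.card_prod, Fintype.card_fun, Fintype.card_fin]
      have htop := hwide (j + 1) (by omega) le_rfl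
      rwa [Nat.add_sub_cancel_left, one_mul, min_eq_left hB.le] at htop
    obtain ⟨e'⟩ := Function.Embedding.nonempty_of_card_le hcard
    have hcomp : f ∘ powerSumCoeffs r (r ^ j) (G := Fin (d 0) → Fin r) = 0 := by
      refine ih _ e' (fun l h1 h2 => ?_) (r ^ j) rfl _
        (hf.comp (analyticOnNhd_powerSumCoeffs r _) (Set.mapsTo_univ _ _)) fun W => ?_
      · rw [Fintype.card_prod, Fintype.card_fun, Fintype.card_fin, Fintype.card_fin, mul_assoc,
          ← pow_add, ← one_add_mul, show 1 + (j + 1 - l) = j + 1 + 1 - l by omega]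
        exact hwide l h1 (by omega)
      · obtain ⟨W', hW'⟩ := exists_net_succ_eq_sum_pow r d W j e e'
        rw [← hvan W', Function.comp_apply]
        congr 1
        funext k m
        rw [powerSumCoeffs, hW']
        simp only [ofCoeffs_coeff (net_succ_isHomogeneous r d W j _)]
    obtain ⟨w, hw⟩ := exists_range_powerSumCoeffs_mem_nhds (d 0) (r ^ j) hr κ
    refine hf.eq_of_eventuallyEq analyticOnNhd_const (z₀ := w) ?_
    filter_upwards [hw]
    rintro _ ⟨c, rfl⟩
    exact congrFun hcomp c

end Network

/-- Bound on filling widths: if `r ≥ 2` and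
`d_{h-i} ≥ min(d_h · r^{i·d₀}, C(r^{h-i} + d₀ - 1, r^{h-i}))` for `i = 1, …, h-1`, then the
functional variety `V_{d,r}` is filling: every polynomial function of the coefficients that
vanishes identically on the functional space vanishes on the whole ambient space
`Sym_{r^{h-1}}(ℝ^{d₀})^{d_h}` (i.e. on all tuples of homogeneous degree-`r^{h-1}`
polynomials). -/
theorem bound_on_filling_widths
    (r h : ℕ) (hr : 2 ≤ r) (hh : 1 ≤ h) (d : ℕ → ℕ) (hd : ∀ j, 0 < d j)
    (hwide : ∀ i : ℕ, 1 ≤ i → i ≤ h - 1 →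
      min (d h * r ^ (i * d 0)) (Nat.choose (r ^ (h - i) + d 0 - 1) (r ^ (h - i)))
        ≤ d (h - i)) :
    ∀ q : MvPolynomial (Fin (d h) × (Fin (d 0) →₀ ℕ)) ℝ,
      (∀ W : ∀ j : ℕ, Matrix (Fin (d (j + 1))) (Fin (d j)) ℝ,
        MvPolynomial.eval (fun jm => MvPolynomial.coeff jm.2 (net r d W h jm.1)) q = 0) →
      ∀ p : Fin (d h) → MvPolynomial (Fin (d 0)) ℝ,
        (∀ j, (p j).IsHomogeneous (r ^ (h - 1))) →
        MvPolynomial.eval (fun jm => MvPolynomial.coeff jm.2 (p jm.1)) q = 0 := by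
  intro q hq p hp
  obtain ⟨j, rfl⟩ : ∃ j, h = j + 1 := ⟨h - 1, by omega⟩
  rw [Nat.add_sub_cancel] at hp
  let f : (Fin (d (j + 1)) → FormIndex (d 0) (r ^ j) → ℝ) → ℝ := fun c =>
    MvPolynomial.eval (fun jm => (ofCoeffs (c jm.1)).coeff jm.2) q
  have hf : AnalyticOnNhd ℝ f Set.univ := fun c _ => by
    simp only [f, ← MvPolynomial.coe_aeval_eq_eval]
    exact AnalyticAt.aeval_mvPolynomial (fun jm => analyticAt_coeff_ofCoeffs _ _ _) q
  have hzero : f = 0 := by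
    refine eq_zero_of_vanishes_on_net r d (by omega) (hd 0) j (Fin (d (j + 1)))
      (Function.Embedding.refl _) (fun l hl hlj => ?_) (r ^ j) rfl f hf fun W => ?_
    · have := hwide (j + 1 - l) (by omega) (by omega)
      rwa [show j + 1 - (j + 1 - l) = l by omega, ← Fintype.card_fin (d (j + 1))] at this
    · simp only [f, Function.Embedding.refl_apply,
        ofCoeffs_coeff (net_succ_isHomogeneous r d W j _)]
      exact hq W
  have := congrFun hzero fun i m => (p i).coeff m.1
  simp only [f, Pi.zero_apply] at this
  simpa only [ofCoeffs_coeff (hp _)] using this
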